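/- Let a₂, a₃ ∈ ℂ with a₂a₃ ≠ 1, and let μ be the evolution algebra structure on ℂ² relative to the basis e₁, e₂ given by μ(e₁,e₁) = e₁ + a₂e₂ and μ(e₂,e₂) = a₃e₁ + e₂ (the algebra 𝓔₅(a₂,a₃)). Then the space of 2-coboundaries B²(μ) equals the span, as structure matrices, of (−1 −2a₂; a₃ 0) and (0 a₂; −2a₃ −1); explicitly, B²(μ) = { θ ∈ Z²(ℂ²) : θ(e₁,e₁) = −ξ₁e₁ + a₂(ξ₂ − 2ξ₁)e₂ and θ(e₂,e₂) = a₃(ξ₁ − 2ξ₂)e₁ − ξ₂e₂ for some ξ₁,ξ₂ ∈ ℂ }. -/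

import Mathlib

/-!
If the squares of two distinct vectors of a natural basis are linearly independent, the coboundary
of `φ` vanishes on that pair only when the corresponding off-diagonal entries of `φ` are zero.
Hence the coboundaries that are again evolution structures come exactly from the `φ` which are
diagonal in the natural basis, and the diagonal entries of `φ` are the parameters `ξ`. For
`𝓔₅(a₂,a₃)` the two squares are independent because their determinant `1 - a₂a₃` is nonzero.
-/

open Module

variable {ι R M : Type*} [CommRing R] [AddCommGroup M] [Module R M]

/-- The 2-coboundary `δ_μ φ` of an endomorphism `φ` with respect to a bilinear multiplication `μ`.
That a bilinear map `θ` is an evolution structure (equivalently, a 2-cocycle) relative to a basis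
`b` is expressed as `θ.IsOrthoᵢ b`; this is not part of the definition. -/
def coboundary (μ : M →ₗ[R] M →ₗ[R] M) (φ : M →ₗ[R] M) : M →ₗ[R] M →ₗ[R] M :=
  μ.compr₂ φ - μ.compl₂ φ - μ.comp φ

theorem coboundary_apply (μ : M →ₗ[R] M →ₗ[R] M) (φ : M →ₗ[R] M) (u v : M) :
    coboundary μ φ u v = φ (μ u v) - μ u (φ v) - μ (φ u) v :=
  rfl

/-- The endomorphism that is diagonal in the basis `b`, with diagonal entries `c`; unlike
`Matrix.toLin b b (Matrix.diagonal c)` it does not require a finite basis. -/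
noncomputable def diagonalEnd (b : Basis ι R M) (c : ι → R) : M →ₗ[R] M :=
  b.constr R fun i => c i • b i

@[simp]
theorem diagonalEnd_apply_basis (b : Basis ι R M) (c : ι → R) (i : ι) :
    diagonalEnd b c (b i) = c i • b i :=
  b.constr_basis R _ i

theorem coboundary_diagonalEnd_apply_basis (b : Basis ι R M) (μ : M →ₗ[R] M →ₗ[R] M)
    (c : ι → R) (i j : ι) :
    coboundary μ (diagonalEnd b c) (b i) (b j) =
      diagonalEnd b c (μ (b i) (b j)) - (c i + c j) • μ (b i) (b j) := by
  simp only [coboundary_apply, diagonalEnd_apply_basis, map_smul, LinearMap.smul_apply]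
  module

section NaturalBasis

variable {b : Basis ι R M} {μ θ : M →ₗ[R] M →ₗ[R] M}

theorem apply_basis_left_of_isOrthoᵢ (hμ : μ.IsOrthoᵢ b) (i : ι) (u : M) :
    μ (b i) u = b.repr u i • μ (b i) (b i) := by
  suffices h : μ (b i) = (b.coord i).smulRight (μ (b i) (b i)) from LinearMap.congr_fun h u
  refine b.ext fun j => ?_
  obtain rfl | hij := eq_or_ne i j
  · simp
  · simp [hij.symm, LinearMap.isOrthoᵢ_def.mp hμ i j hij]

theorem apply_basis_right_of_isOrthoᵢ (hμ : μ.IsOrthoᵢ b) (u : M) (i : ι) :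
    μ u (b i) = b.repr u i • μ (b i) (b i) :=
  apply_basis_left_of_isOrthoᵢ (μ := μ.flip) (μ.isOrthoᵢ_flip.mp hμ) i u

theorem eq_iff_apply_basis_self_of_isOrthoᵢ (hμ : μ.IsOrthoᵢ b) (hθ : θ.IsOrthoᵢ b) :
    θ = μ ↔ ∀ i, θ (b i) (b i) = μ (b i) (b i) := by
  refine ⟨fun h i => by rw [h], fun h => b.ext fun i => LinearMap.ext fun u => ?_⟩
  rw [apply_basis_left_of_isOrthoᵢ hθ, apply_basis_left_of_isOrthoᵢ hμ, h]

theorem coboundary_apply_basis_of_ne (hμ : μ.IsOrthoᵢ b) (φ : M →ₗ[R] M) {i j : ι} (hij : i ≠ j) :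
    coboundary μ φ (b i) (b j) =
      -(b.repr (φ (b j)) i • μ (b i) (b i) + b.repr (φ (b i)) j • μ (b j) (b j)) := by
  rw [coboundary_apply, LinearMap.isOrthoᵢ_def.mp hμ i j hij, map_zero,
    apply_basis_left_of_isOrthoᵢ hμ i (φ (b j)), apply_basis_right_of_isOrthoᵢ hμ (φ (b i)) j]
  abel

theorem isOrthoᵢ_coboundary_diagonalEnd (hμ : μ.IsOrthoᵢ b) (c : ι → R) :
    (coboundary μ (diagonalEnd b c)).IsOrthoᵢ b :=
  LinearMap.isOrthoᵢ_def.mpr fun i j hij => by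
    rw [coboundary_diagonalEnd_apply_basis, LinearMap.isOrthoᵢ_def.mp hμ i j hij, map_zero,
      smul_zero, sub_zero]

theorem exists_eq_diagonalEnd_of_isOrthoᵢ_coboundary (hμ : μ.IsOrthoᵢ b)
    (hsq : Pairwise fun i j => LinearIndependent R ![μ (b i) (b i), μ (b j) (b j)])
    {φ : M →ₗ[R] M} (hφ : (coboundary μ φ).IsOrthoᵢ b) :
    ∃ c : ι → R, φ = diagonalEnd b c := by
  have offDiag_eq_zero {i j : ι} (hij : i ≠ j) : b.repr (φ (b i)) j = 0 := by
    have hcob := LinearMap.isOrthoᵢ_def.mp hφ i j hij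
    rw [coboundary_apply_basis_of_ne hμ φ hij, neg_eq_zero] at hcob
    exact (LinearIndependent.pair_iff.mp (hsq hij) _ _ hcob).2
  refine ⟨fun i => b.repr (φ (b i)) i, b.ext fun i => b.ext_elem fun j => ?_⟩
  obtain rfl | hij := eq_or_ne i j
  · simp
  · simp [hij, offDiag_eq_zero hij]

theorem exists_eq_coboundary_iff (hμ : μ.IsOrthoᵢ b) (hθ : θ.IsOrthoᵢ b)
    (hsq : Pairwise fun i j => LinearIndependent R ![μ (b i) (b i), μ (b j) (b j)]) :
    (∃ φ, θ = coboundary μ φ) ↔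
      ∃ c : ι → R, ∀ i,
        θ (b i) (b i) = diagonalEnd b c (μ (b i) (b i)) - (2 * c i) • μ (b i) (b i) := by
  have eq_coboundary_diagonalEnd_iff (c : ι → R) : θ = coboundary μ (diagonalEnd b c) ↔
      ∀ i, θ (b i) (b i) = diagonalEnd b c (μ (b i) (b i)) - (2 * c i) • μ (b i) (b i) := by
    simp only [eq_iff_apply_basis_self_of_isOrthoᵢ (isOrthoᵢ_coboundary_diagonalEnd hμ c) hθ,
      coboundary_diagonalEnd_apply_basis, two_mul]
  simp only [← eq_coboundary_diagonalEnd_iff]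
  constructor
  · rintro ⟨φ, rfl⟩
    obtain ⟨c, rfl⟩ := exists_eq_diagonalEnd_of_isOrthoᵢ_coboundary hμ hsq hθ
    exact ⟨c, rfl⟩
  · rintro ⟨c, hc⟩
    exact ⟨diagonalEnd b c, hc⟩

end NaturalBasis

theorem stmt10_general [IsDomain R] (b : Basis (Fin 2) R M) {a₂ a₃ : R} (ha : a₂ * a₃ ≠ 1)
    {μ θ : M →ₗ[R] M →ₗ[R] M} (hμ : μ.IsOrthoᵢ b) (hμ0 : μ (b 0) (b 0) = b 0 + a₂ • b 1)
    (hμ1 : μ (b 1) (b 1) = a₃ • b 0 + b 1) (hθ : θ.IsOrthoᵢ b) :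
    (∃ φ, θ = coboundary μ φ) ↔
      ∃ ξ₁ ξ₂ : R,
        θ (b 0) (b 0) = (-ξ₁) • b 0 + (a₂ * (ξ₂ - 2 * ξ₁)) • b 1 ∧
        θ (b 1) (b 1) = (a₃ * (ξ₁ - 2 * ξ₂)) • b 0 + (-ξ₂) • b 1 := by
  have hb : LinearIndependent R ![b 0, b 1] := by
    rw [show ![b 0, b 1] = b from FinVec.etaExpand_eq b]
    exact b.linearIndependent
  have hdet : (1 : R) * 1 ≠ a₂ * a₃ := by rwa [one_mul, ne_comm]
  have hsq01 : LinearIndependent R ![μ (b 0) (b 0), μ (b 1) (b 1)] := by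
    simpa only [hμ0, hμ1, one_smul] using
      (LinearIndependent.pair_add_smul_add_smul_iff 1 a₂ a₃ 1).mpr ⟨hb, hdet⟩
  have hsq : Pairwise fun i j => LinearIndependent R ![μ (b i) (b i), μ (b j) (b j)] := by
    simpa [Pairwise, Fin.forall_fin_two] using
      And.intro hsq01 (LinearIndependent.pair_symm_iff.mp hsq01)
  rw [exists_eq_coboundary_iff hμ hθ hsq, ← FinVec.exists_iff]
  refine exists_congr fun ξ₁ => exists_congr fun ξ₂ => Fin.forall_fin_two.trans ?_
  simp only [hμ0, hμ1, map_add, map_smul, diagonalEnd_apply_basis, Matrix.cons_val_zero,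
    Matrix.cons_val_one]
  congr! 2 <;> module

/-- For the evolution algebra `𝓔₅(a₂,a₃)` on `ℂ²` with
`e₁² = e₁ + a₂e₂`, `e₂² = a₃e₁ + e₂` and `a₂a₃ ≠ 1`, a 2-cocycle `θ` is a
2-coboundary if and only if `θ(e₁,e₁) = −ξ₁e₁ + a₂(ξ₂ − 2ξ₁)e₂` and
`θ(e₂,e₂) = a₃(ξ₁ − 2ξ₂)e₁ − ξ₂e₂` for some `ξ₁, ξ₂ ∈ ℂ`. -/
theorem stmt10 (a₂ a₃ : ℂ) (ha : a₂ * a₃ ≠ 1)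
    (e : Fin 2 → (Fin 2 → ℂ)) (he : ∀ i, e i = Pi.single i 1)
    (μ θ : (Fin 2 → ℂ) →ₗ[ℂ] (Fin 2 → ℂ) →ₗ[ℂ] (Fin 2 → ℂ))
    (hμz : ∀ i j : Fin 2, i ≠ j → μ (e i) (e j) = 0)
    (hμ0 : μ (e 0) (e 0) = e 0 + a₂ • e 1)
    (hμ1 : μ (e 1) (e 1) = a₃ • e 0 + e 1)
    (hθz : ∀ i j : Fin 2, i ≠ j → θ (e i) (e j) = 0) :
    (∃ φ : (Fin 2 → ℂ) →ₗ[ℂ] (Fin 2 → ℂ),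
        ∀ u v : Fin 2 → ℂ, θ u v = φ (μ u v) - μ u (φ v) - μ (φ u) v) ↔
    (∃ ξ₁ ξ₂ : ℂ,
        θ (e 0) (e 0) = (-ξ₁) • e 0 + (a₂ * (ξ₂ - 2 * ξ₁)) • e 1 ∧
        θ (e 1) (e 1) = (a₃ * (ξ₁ - 2 * ξ₂)) • e 0 + (-ξ₂) • e 1) := by
  obtain rfl : e = Pi.basisFun ℂ (Fin 2) := funext fun i => by rw [he, Pi.basisFun_apply]
  simpa only [LinearMap.ext_iff₂, coboundary_apply] using
    stmt10_general _ ha (LinearMap.isOrthoᵢ_def.mpr hμz) hμ0 hμ1 (LinearMap.isOrthoᵢ_def.mpr hθz)
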